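/- For all positive integers k and p, the extended alternating quadratic sine sum satisfies ∑_{n=1}^{4kp} (-1)^n * sin(π n² / (4k)) = p * (-1)^k * √(2k). -/

import Mathlib

/-!
Near a rational point `a / c` with `a * c` even, splitting the theta series into residue classes
modulo `c` and applying the functional equation to each class shows that
`√(-i w) θ(a / c + w) → G(a, c) / c`, where `G(a, c) = ∑ r mod c, exp (πi a r² / c)`. The functional
equation of `θ` exchanges the cusps `a / c` and `-c / a`; comparing leading coefficients gives the
Landsberg–Schaar reciprocity between `G(a, c)` and `G(-c, a)`. For `a = 1` the second sum has a
single term, so `G(1, c) = √c exp (πi / 4)`, whose imaginary part is a sine sum.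

With `c = 4k`, the shift `n ↦ n + 2k` changes the angle `π n² / (4k)` by `(n + k) π`, which absorbs
the alternating sign up to the constant `(-1)^k`.
-/

open Finset Real

open Filter Topology
open Complex (I)
open scoped Complex

theorem ofReal_mul_cpow {r : ℝ} (hr : 0 ≤ r) (z s : ℂ) :
    ((r : ℂ) * z) ^ s = (r : ℂ) ^ s * z ^ s := by
  rcases eq_or_ne s 0 with rfl | hs
  · simp
  rcases hr.eq_or_lt with rfl | hr
  · simp [Complex.zero_cpow hs]
  rcases eq_or_ne z 0 with rfl | hz
  · simp [Complex.zero_cpow hs]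
  have hrC : (r : ℂ) ≠ 0 := Complex.ofReal_ne_zero.mpr hr.ne'
  rw [Complex.cpow_def_of_ne_zero (mul_ne_zero hrC hz), Complex.cpow_def_of_ne_zero hrC,
    Complex.cpow_def_of_ne_zero hz, Complex.log_ofReal_mul hr hz, Complex.ofReal_log hr.le, add_mul,
    Complex.exp_add]

theorem ofReal_cpow_one_half {r : ℝ} (hr : 0 ≤ r) : (r : ℂ) ^ (1 / 2 : ℂ) = (√r : ℂ) := by
  rw [Real.sqrt_eq_rpow, Complex.ofReal_cpow hr]
  norm_num

theorem neg_I_cpow_one_half : (-I) ^ (1 / 2 : ℂ) = (cexp (π / 4 * I))⁻¹ := by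
  rw [Complex.cpow_def_of_ne_zero (neg_ne_zero.mpr Complex.I_ne_zero), Complex.log_neg_I,
    ← Complex.exp_neg]
  ring_nf

theorem inv_neg_I_mul_ofReal_cpow_one_half {r : ℝ} (hr : 0 ≤ r) :
    ((-I * r) ^ (1 / 2 : ℂ))⁻¹ = √r⁻¹ * cexp (π / 4 * I) := by
  rw [mul_comm, ofReal_mul_cpow hr, ofReal_cpow_one_half hr, neg_I_cpow_one_half, mul_inv, inv_inv,
    sqrt_inv, Complex.ofReal_inv]

theorem tsum_int_eq_sum_range_tsum {R : Type*} [AddCommGroup R] [UniformSpace R]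
    [IsUniformAddGroup R] [CompleteSpace R] [T0Space R] {f : ℤ → R} (hf : Summable f) {c : ℕ}
    (hc : 0 < c) : ∑' n, f n = ∑ r ∈ range c, ∑' q : ℤ, f (q * c + r) := by
  have : NeZero c := ⟨hc.ne'⟩
  let e := (Equiv.prodComm (Fin c) ℤ).trans (Int.divModEquiv c).symm
  calc ∑' n, f n = ∑' x, f (e x) := (e.tsum_eq f).symm
    _ = ∑ r : Fin c, ∑' q : ℤ, f (q * c + (r : ℕ)) := by
        rw [Summable.tsum_prod (f := fun x => f (e x)) (e.summable_iff.mpr hf), tsum_fintype]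
        rfl
    _ = ∑ r ∈ range c, ∑' q : ℤ, f (q * c + r) :=
        Fin.sum_univ_eq_sum_range (fun r => ∑' q : ℤ, f (q * c + r)) c

theorem tendsto_jacobiTheta₂_term_nhds_zero {ι : Type*} {l : Filter ι} {τ : ι → ℂ}
    (hτ : Tendsto (fun i => (τ i).im) l atTop) (z : ℂ) {n : ℤ} (hn : n ≠ 0) :
    Tendsto (fun i => jacobiTheta₂_term n z (τ i)) l (𝓝 0) := by
  rw [tendsto_zero_iff_norm_tendsto_zero]
  simp only [norm_jacobiTheta₂_term, sub_eq_add_neg]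
  have hcoeff : -π * (n : ℝ) ^ 2 < 0 := by
    have : (0 : ℝ) < (n : ℝ) ^ 2 := by positivity
    nlinarith [pi_pos]
  exact tendsto_exp_atBot.comp
    (tendsto_atBot_add_const_right l _ (hτ.const_mul_atTop_of_neg hcoeff))

theorem tendsto_jacobiTheta₂_nhds_one {ι : Type*} {l : Filter ι} {τ : ι → ℂ}
    (hτ : Tendsto (fun i => (τ i).im) l atTop) (z : ℂ) :
    Tendsto (fun i => jacobiTheta₂ z (τ i)) l (𝓝 1) := by
  have hterm (n : ℤ) : Tendsto (fun i => jacobiTheta₂_term n z (τ i)) l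
      (𝓝 (if n = 0 then 1 else 0)) := by
    split_ifs with hn
    · simpa [hn, jacobiTheta₂_term] using tendsto_const_nhds
    · exact tendsto_jacobiTheta₂_term_nhds_zero hτ z hn
  have hbound : ∀ᶠ i in l, ∀ n : ℤ, ‖jacobiTheta₂_term n z (τ i)‖ ≤
      rexp (-π * (1 * n ^ 2 - 2 * |z.im| * |n|)) := by
    filter_upwards [hτ.eventually_ge_atTop 1] with i hi n
    exact norm_jacobiTheta₂_term_le one_pos le_rfl hi n
  have hsummable := summable_pow_mul_jacobiTheta₂_term_bound |z.im| one_pos 0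
  simp only [pow_zero, one_mul] at hsummable
  simpa [jacobiTheta₂] using tendsto_tsum_of_dominated_convergence (by simpa using hsummable) hterm
    hbound

theorem jacobiTheta_functional_equation (τ : ℂ) :
    jacobiTheta τ = 1 / (-I * τ) ^ (1 / 2 : ℂ) * jacobiTheta (-1 / τ) := by
  simpa [jacobiTheta_eq_jacobiTheta₂] using jacobiTheta₂_functional_equation 0 τ

/-- The quadratic Gauss sum `G(a, c)`, the leading coefficient of the theta function at the cusp
`a / c`. The phase is `πi a r² / c` rather than `2πi a r² / c`, so the summand depends only on the
residue of `r` modulo `c` as soon as `a * c` is even. -/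
noncomputable def quadraticGaussSum (a : ℤ) (c : ℕ) : ℂ :=
  ∑ r ∈ range c, cexp (π * I * a * r ^ 2 / c)

theorem jacobiTheta_div_add_eq_sum {a : ℤ} {c : ℕ} (hc : 0 < c) (hac : Even (a * c)) {w : ℂ}
    (hw : 0 < w.im) :
    jacobiTheta (a / c + w) = ∑ r ∈ range c, cexp (π * I * a * r ^ 2 / c) *
      (cexp (π * I * r ^ 2 * w) * jacobiTheta₂ (r * c * w) (c ^ 2 * w)) := by
  have hτ : 0 < (a / c + w : ℂ).im := by
    rwa [Complex.add_im, ← Complex.ofReal_intCast, ← Complex.ofReal_natCast, ← Complex.ofReal_div,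
      Complex.ofReal_im, zero_add]
  have hcC : (c : ℂ) ≠ 0 := Nat.cast_ne_zero.mpr hc.ne'
  obtain ⟨m, hm⟩ := hac.two_dvd
  have hmC : (a * c : ℂ) = 2 * m := by exact_mod_cast hm
  rw [jacobiTheta_eq_jacobiTheta₂, jacobiTheta₂,
    tsum_int_eq_sum_range_tsum ((summable_jacobiTheta₂_term_iff 0 _).mpr hτ) hc]
  refine sum_congr rfl fun r _ => ?_
  rw [jacobiTheta₂, ← tsum_mul_left, ← tsum_mul_left]
  refine tsum_congr fun q => ?_
  simp only [jacobiTheta₂_term]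
  rw [← Complex.exp_add, ← Complex.exp_add, Complex.exp_eq_exp_iff_exists_int]
  refine ⟨a * q * r + m * q ^ 2, ?_⟩
  push_cast
  field_simp
  linear_combination q ^ 2 * c * hmC

theorem cpow_mul_exp_mul_jacobiTheta₂ {c : ℕ} (hc : 0 < c) (r : ℕ) {w : ℂ} (hw : w ≠ 0) :
    (-I * w) ^ (1 / 2 : ℂ) * (cexp (π * I * r ^ 2 * w) * jacobiTheta₂ (r * c * w) (c ^ 2 * w)) =
      jacobiTheta₂ (r / c) (-1 / (c ^ 2 * w)) / c := by
  have hcC : (c : ℂ) ≠ 0 := Nat.cast_ne_zero.mpr hc.ne'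
  have hroot : (-I * w) ^ (1 / 2 : ℂ) ≠ 0 := by simp [hw]
  have hscale : (-I * (c ^ 2 * w)) ^ (1 / 2 : ℂ) = c * (-I * w) ^ (1 / 2 : ℂ) := by
    have := ofReal_mul_cpow (sq_nonneg (c : ℝ)) (-I * w) (1 / 2)
    rw [ofReal_cpow_one_half (sq_nonneg _), sqrt_sq c.cast_nonneg] at this
    push_cast at this
    rw [← this]
    ring_nf
  have hexp : cexp (π * I * r ^ 2 * w) * cexp (-π * I * (r * c * w) ^ 2 / (c ^ 2 * w)) = 1 := by
    rw [← Complex.exp_add, ← Complex.exp_zero]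
    congr 1
    field_simp
    ring
  have hdiv : (r * c * w) / (c ^ 2 * w) = (r / c : ℂ) := by field_simp
  rw [jacobiTheta₂_functional_equation, hscale, hdiv]
  set e₁ := cexp (π * I * r ^ 2 * w)
  set e₂ := cexp (-π * I * (r * c * w) ^ 2 / (c ^ 2 * w))
  set θ := jacobiTheta₂ (r / c) (-1 / (c ^ 2 * w))
  set ρ := (-I * w) ^ (1 / 2 : ℂ)
  calc ρ * (e₁ * (1 / (c * ρ) * e₂ * θ)) = e₁ * e₂ * θ / c := by field_simp
    _ = θ / c := by rw [hexp, one_mul]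

/- The hypothesis lets `w` tend to `0` inside shrinking horoballs rather than only vertically: the
inversion `τ ↦ -1 / τ` maps the vertical ray above `a / c` to a circular arc ending at `-c / a`. -/
theorem tendsto_cpow_mul_jacobiTheta_div_add {ι : Type*} {l : Filter ι} {a : ℤ} {c : ℕ}
    (hc : 0 < c) (hac : Even (a * c)) {w : ι → ℂ} (hw : Tendsto (fun i => (-1 / w i).im) l atTop) :
    Tendsto (fun i => (-I * w i) ^ (1 / 2 : ℂ) * jacobiTheta (a / c + w i)) l
      (𝓝 (quadraticGaussSum a c / c)) := by
  have hscaled : Tendsto (fun i => (-1 / (c ^ 2 * w i)).im) l atTop := by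
    have hpos : (0 : ℝ) < (c ^ 2 : ℝ)⁻¹ := by positivity
    refine (hw.const_mul_atTop hpos).congr fun i => ?_
    rw [← Complex.im_ofReal_mul]
    push_cast
    congr 1
    ring
  have hlim : Tendsto (fun i => ∑ r ∈ range c, cexp (π * I * a * r ^ 2 / c) *
      (jacobiTheta₂ (r / c) (-1 / (c ^ 2 * w i)) / c)) l
      (𝓝 (∑ r ∈ range c, cexp (π * I * a * r ^ 2 / c) * (1 / c))) :=
    tendsto_finsetSum _ fun r _ =>
      ((tendsto_jacobiTheta₂_nhds_one hscaled _).div_const _).const_mul _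
  rw [← sum_mul, mul_one_div] at hlim
  refine hlim.congr' ?_
  filter_upwards [hw.eventually_gt_atTop 0] with i hi
  have hw0 : w i ≠ 0 := fun h => by simp [h] at hi
  have hwim : 0 < (w i).im := by
    rw [neg_div, one_div, Complex.neg_im, Complex.inv_im, neg_div, neg_neg] at hi
    exact (div_pos_iff_of_pos_right (Complex.normSq_pos.mpr hw0)).mp hi
  rw [jacobiTheta_div_add_eq_sum hc hac hwim, mul_sum]
  refine sum_congr rfl fun r _ => ?_
  rw [← cpow_mul_exp_mul_jacobiTheta₂ hc r hw0]
  ring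

theorem cpow_mul_jacobiTheta_add_I_mul {α s : ℝ} (hα : α ≠ 0) (hs : 0 < s) :
    ((α * (α + I * s))⁻¹ : ℂ) ^ (1 / 2 : ℂ) *
        ((-I * (I * s)) ^ (1 / 2 : ℂ) * jacobiTheta (α + I * s)) =
      ((-I * (α + I * s)) ^ (1 / 2 : ℂ))⁻¹ *
        ((-I * (I * s / (α * (α + I * s)))) ^ (1 / 2 : ℂ) *
          jacobiTheta (-1 / α + I * s / (α * (α + I * s)))) := by
  have hαC : (α : ℂ) ≠ 0 := Complex.ofReal_ne_zero.mpr hα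
  have hτ : (α + I * s : ℂ) ≠ 0 := fun h => hs.ne' (by simpa using congrArg Complex.im h)
  have hinv : -1 / (α + I * s : ℂ) = -1 / α + I * s / (α * (α + I * s)) := by
    field_simp
    ring
  have hrot : -I * (I * s) = s := by linear_combination -s * Complex.I_sq
  have hsplit : -I * (I * s / (α * (α + I * s))) = s * (α * (α + I * s) : ℂ)⁻¹ := by
    rw [mul_div_assoc', hrot, div_eq_mul_inv]
  rw [jacobiTheta_functional_equation, hinv, hrot, hsplit, ofReal_mul_cpow hs.le]
  ring

theorem im_neg_one_div_div_mul_add (α : ℝ) {w : ℂ} (hw : w ≠ 0) :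
    (-1 / (w / (α * (α + w)))).im = α ^ 2 * (-1 / w).im := by
  have : -1 / (w / (α * (α + w))) = (α ^ 2 : ℝ) * (-1 / w) + (-α : ℝ) := by
    push_cast
    field_simp
    ring
  rw [this, Complex.add_im, Complex.im_ofReal_mul, Complex.ofReal_im, add_zero]

theorem tendsto_im_neg_one_div_I_mul :
    Tendsto (fun s : ℝ => (-1 / (I * s)).im) (𝓝[>] 0) atTop := by
  refine tendsto_inv_nhdsGT_zero.congr fun s => ?_
  have : -1 / (I * s) = (s⁻¹ : ℝ) * I := by
    push_cast
    rw [div_mul_eq_div_div, Complex.div_I]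
    ring
  rw [this, Complex.im_ofReal_mul, Complex.I_im, mul_one]

theorem tendsto_inv_mul_add_cpow_one_half {α : ℝ} (hα : 0 < α) :
    Tendsto (fun s : ℝ => ((α * (α + I * s))⁻¹ : ℂ) ^ (1 / 2 : ℂ)) (𝓝[>] 0) (𝓝 (α : ℂ)⁻¹) := by
  have hbase : (α * (α + I * (0 : ℝ)) : ℂ)⁻¹ = ((α⁻¹ ^ 2 : ℝ) : ℂ) := by
    push_cast
    ring
  have hmem : (α * (α + I * (0 : ℝ)) : ℂ)⁻¹ ∈ Complex.slitPlane := by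
    rw [hbase, Complex.ofReal_mem_slitPlane]
    positivity
  have hvalue : ((α * (α + I * (0 : ℝ)) : ℂ)⁻¹) ^ (1 / 2 : ℂ) = (α : ℂ)⁻¹ := by
    rw [hbase, ofReal_cpow_one_half (sq_nonneg _), sqrt_sq (inv_nonneg.mpr hα.le),
      Complex.ofReal_inv]
  have hcont : ContinuousAt (fun s : ℝ => ((α * (α + I * s))⁻¹ : ℂ) ^ (1 / 2 : ℂ)) 0 :=
    (ContinuousAt.inv₀ (by fun_prop) (by simp [hα.ne'])).cpow continuousAt_const hmem
  rw [← hvalue]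
  exact hcont.tendsto.mono_left nhdsWithin_le_nhds

theorem tendsto_neg_I_mul_add_cpow_one_half {α : ℝ} (hα : α ≠ 0) :
    Tendsto (fun s : ℝ => (-I * (α + I * s)) ^ (1 / 2 : ℂ)) (𝓝[>] 0)
      (𝓝 ((-I * α) ^ (1 / 2 : ℂ))) := by
  have : ContinuousAt (fun s : ℝ => (-I * (α + I * s)) ^ (1 / 2 : ℂ)) 0 :=
    ContinuousAt.cpow (by fun_prop) continuousAt_const (Or.inr (by simpa using hα))
  simpa [ContinuousAt] using this.mono_left nhdsWithin_le_nhds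

theorem quadraticGaussSum_landsberg_schaar {a c : ℕ} (ha : 0 < a) (hc : 0 < c)
    (hac : Even (a * c)) :
    quadraticGaussSum a c = √(c / a) * cexp (π / 4 * I) * quadraticGaussSum (-c) a := by
  have haC : (a : ℂ) ≠ 0 := Nat.cast_ne_zero.mpr ha.ne'
  have hcC : (c : ℂ) ≠ 0 := Nat.cast_ne_zero.mpr hc.ne'
  set α : ℝ := a / c with hα_def
  have hα : 0 < α := by positivity
  have hαC : (α : ℂ) = (a : ℤ) / c := by push_cast [hα_def]; rfl
  have hαC_inv : (-1 / α : ℂ) = (-c : ℤ) / a := by push_cast [hα_def]; field_simp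
  have hroot : (-I * α) ^ (1 / 2 : ℂ) ≠ 0 := by simp [hα.ne']
  have himage : Tendsto (fun s : ℝ => (-1 / (I * s / (α * (α + I * s)))).im) (𝓝[>] 0) atTop := by
    refine (tendsto_im_neg_one_div_I_mul.const_mul_atTop (sq_pos_of_pos hα)).congr' ?_
    filter_upwards [self_mem_nhdsWithin] with s hs
    exact (im_neg_one_div_div_mul_add α (by simpa using hs.ne')).symm
  have hleft := (tendsto_inv_mul_add_cpow_one_half hα).mul
    (tendsto_cpow_mul_jacobiTheta_div_add hc (mod_cast hac : Even ((a : ℤ) * c))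
      tendsto_im_neg_one_div_I_mul)
  have hright := ((tendsto_neg_I_mul_add_cpow_one_half hα.ne').inv₀ hroot).mul
    (tendsto_cpow_mul_jacobiTheta_div_add ha (a := -c)
      (by rw [neg_mul, even_neg, mul_comm]; exact_mod_cast hac) himage)
  have hlim := tendsto_nhds_unique_of_eventuallyEq hleft hright <| by
    filter_upwards [self_mem_nhdsWithin] with s hs
    rw [← hαC, ← hαC_inv]
    exact cpow_mul_jacobiTheta_add_I_mul hα.ne' hs
  rw [inv_neg_I_mul_ofReal_cpow_one_half hα.le, hα_def, inv_div] at hlim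
  calc quadraticGaussSum a c = a * (((a / c : ℝ) : ℂ)⁻¹ * (quadraticGaussSum a c / c)) := by
        push_cast
        field_simp
    _ = √(c / a) * cexp (π / 4 * I) * quadraticGaussSum (-c) a := by
        rw [hlim]
        field_simp

theorem quadraticGaussSum_one_left {c : ℕ} (hc : 0 < c) (heven : Even c) :
    quadraticGaussSum 1 c = √c * cexp (π / 4 * I) := by
  have h := quadraticGaussSum_landsberg_schaar one_pos hc (by simpa using heven)
  have : quadraticGaussSum (-c) 1 = 1 := by simp [quadraticGaussSum]
  simpa [this] using h

theorem sum_range_sin_pi_mul_sq_div {c : ℕ} (hc : 0 < c) (heven : Even c) :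
    ∑ n ∈ range c, Real.sin (π * n ^ 2 / c) = √(c / 2) := by
  have h := congrArg Complex.im (quadraticGaussSum_one_left hc heven)
  have hterm (n : ℕ) : (cexp (π * I * (1 : ℤ) * n ^ 2 / c)).im = Real.sin (π * n ^ 2 / c) := by
    rw [← Complex.exp_ofReal_mul_I_im]
    push_cast
    ring_nf
  have hangle : (π / 4 * I : ℂ) = (π / 4 : ℝ) * I := by push_cast; rfl
  rw [quadraticGaussSum, Complex.im_sum, sum_congr rfl fun n _ => hterm n, hangle,
    Complex.im_ofReal_mul, Complex.exp_ofReal_mul_I_im, sin_pi_div_four] at h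
  rw [h, sqrt_div c.cast_nonneg]
  have : √2 * √2 = (2 : ℝ) := mul_self_sqrt zero_le_two
  field_simp
  linarith

theorem sum_Ico_eq_sum_range_of_periodic {M : Type*} [AddCommMonoid M] {f : ℕ → M} {N : ℕ}
    (hf : Function.Periodic f N) (a : ℕ) : ∑ n ∈ Ico a (a + N), f n = ∑ n ∈ range N, f n := by
  calc ∑ n ∈ Ico a (a + N), f n = ∑ n ∈ Ico a (a + N), f (n % N) :=
        sum_congr rfl fun n _ => (hf.map_mod_nat n).symm
    _ = ∑ n ∈ range N, f n := by
        have := congrArg (fun s => (s.map f).sum) (Nat.multiset_Ico_map_mod a N)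
        rwa [Multiset.map_map] at this

theorem sum_Ico_add_mul_of_periodic {M : Type*} [AddCommMonoid M] {f : ℕ → M} {N : ℕ}
    (hf : Function.Periodic f N) (a p : ℕ) :
    ∑ n ∈ Ico a (a + p * N), f n = p • ∑ n ∈ range N, f n := by
  induction p with
  | zero => simp
  | succ p ih =>
    rw [Nat.succ_mul, ← add_assoc, ← sum_Ico_consecutive f (Nat.le_add_right a _)
      (Nat.le_add_right _ N), ih, sum_Ico_eq_sum_range_of_periodic hf, succ_nsmul]

theorem periodic_sin_pi_mul_sq_div {c : ℕ} (heven : Even c) :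
    Function.Periodic (fun n : ℕ => Real.sin (π * (n : ℝ) ^ 2 / c)) c := by
  intro n
  rcases eq_or_ne c 0 with rfl | hc
  · simp
  obtain ⟨m, rfl⟩ := heven.two_dvd
  have hm : (m : ℝ) ≠ 0 := mod_cast right_ne_zero_of_mul hc
  have hangle : π * ((n + 2 * m : ℕ) : ℝ) ^ 2 / (2 * m : ℕ) =
      π * (n : ℝ) ^ 2 / (2 * m : ℕ) + ((n + m : ℕ) : ℝ) * (2 * π) := by
    push_cast
    field_simp
    ring
  simp only [hangle, sin_add_nat_mul_two_pi]

theorem neg_one_pow_mul_sin_pi_mul_sq_div {k : ℕ} (hk : 0 < k) (n : ℕ) :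
    (-1 : ℝ) ^ n * Real.sin (π * (n : ℝ) ^ 2 / (4 * k)) =
      (-1) ^ k * Real.sin (π * ((n + 2 * k : ℕ) : ℝ) ^ 2 / (4 * k : ℕ)) := by
  have hangle : π * ((n + 2 * k : ℕ) : ℝ) ^ 2 / (4 * k : ℕ) =
      π * (n : ℝ) ^ 2 / (4 * k) + ((n + k : ℕ) : ℝ) * π := by
    push_cast
    field_simp
    ring
  rw [hangle, sin_add_nat_mul_pi, pow_add, ← mul_assoc, mul_left_comm, ← pow_add,
    (Even.add_self k).neg_one_pow, mul_one]

theorem extended_alternating_quadratic_sine_sum (k p : ℕ) (hk : 0 < k) (hp : 0 < p) :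
    ∑ n ∈ Finset.Icc 1 (4 * k * p), (-1 : ℝ) ^ n *
        Real.sin (π * (n : ℝ) ^ 2 / (4 * k)) =
      (p : ℝ) * (-1 : ℝ) ^ k * Real.sqrt (2 * (k : ℝ)) := by
  have heven : Even (4 * k) := (by decide : Even 4).mul_right k
  have hrange : Ico (1 + 2 * k) (4 * k * p + 1 + 2 * k) =
      Ico (1 + 2 * k) (1 + 2 * k + p * (4 * k)) := by congr 1; ring
  have hsqrt : ((4 * k : ℕ) : ℝ) / 2 = 2 * k := by push_cast; ring
  simp only [neg_one_pow_mul_sin_pi_mul_sq_div hk]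
  rw [← mul_sum, ← Ico_add_one_right_eq_Icc,
    sum_Ico_add' (fun n : ℕ => Real.sin (π * (n : ℝ) ^ 2 / (4 * k : ℕ))), hrange,
    sum_Ico_add_mul_of_periodic (periodic_sin_pi_mul_sq_div heven),
    sum_range_sin_pi_mul_sq_div (by positivity) heven, hsqrt, nsmul_eq_mul]
  ring
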